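/- Under the stated parameter constraints, for every a > 0 and every t ≥ 0, the value c·(a+it)^α − μ (principal branch power) is not a positive real number. -/

import Mathlib

open MeasureTheory Set

/-- `t₀(α) = 2πα/(α+2)`. -/
noncomputable def t0 (α : ℝ) : ℝ := 2 * Real.pi * α / (α + 2)

/-!
For `0 < φ < π`, the open horizontal ray to the right of `e^{iφ}` has arguments filling `(0, φ)`.
For `z` in the closed first quadrant, `e^{iθ} z^α` has an argument in `[θ, θ + απ/2]`, hence in
`[φ, 2π]`, so it misses that ray.
-/

lemma ofReal_mul_exp_sub_exp_ne_ofReal {ρ ψ φ r : ℝ} (hρ : 0 ≤ ρ) (hr : 0 < r) (hφ₀ : 0 < φ)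
    (hφπ : φ < Real.pi) (hφψ : φ ≤ ψ) (hψ : ψ ≤ 2 * Real.pi) :
    (ρ : ℂ) * Complex.exp (ψ * Complex.I) - Complex.exp (φ * Complex.I) ≠ r := by
  intro h
  have hre : ρ * Real.cos ψ - Real.cos φ = r := by
    simpa using congrArg Complex.re h
  have him : ρ * Real.sin ψ - Real.sin φ = 0 := by
    simpa using congrArg Complex.im h
  have hsinφ : 0 < Real.sin φ := Real.sin_pos_of_pos_of_lt_pi hφ₀ hφπ
  have hsinψ : 0 < Real.sin ψ := pos_of_mul_pos_right (by linarith) hρ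
  have hψπ : ψ < Real.pi := by
    by_contra! hπψ
    have : 0 ≤ Real.sin (ψ - Real.pi) :=
      Real.sin_nonneg_of_nonneg_of_le_pi (by linarith) (by linarith)
    rw [Real.sin_sub_pi] at this
    linarith
  have hnonneg : 0 ≤ ρ * Real.sin (ψ - φ) :=
    mul_nonneg hρ (Real.sin_nonneg_of_nonneg_of_le_pi (by linarith) (by linarith))
  have hneg : ρ * Real.sin (ψ - φ) = -(r * Real.sin φ) := by
    rw [Real.sin_sub]
    linear_combination Real.cos φ * him - Real.sin φ * hre
  linarith [mul_pos hr hsinφ]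

lemma exp_mul_I_mul_cpow_ofReal (θ α : ℝ) (z : ℂ) :
    Complex.exp (θ * Complex.I) * z ^ (α : ℂ) =
      (‖z‖ ^ α : ℝ) * Complex.exp ((θ + α * z.arg : ℝ) * Complex.I) := by
  have hpolar : z ^ (α : ℂ) = (‖z‖ ^ α : ℝ) * Complex.exp ((z.arg * α : ℝ) * Complex.I) := by
    rw [Complex.cpow_ofReal, Complex.exp_mul_I, Complex.ofReal_cos, Complex.ofReal_sin]
  rw [hpolar, mul_left_comm, ← Complex.exp_add, ← add_mul, ← Complex.ofReal_add, mul_comm z.arg]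

theorem stmt13_general {α θ φ r : ℝ} {z : ℂ} (hα : 0 ≤ α) (hφ₀ : 0 < φ) (hφπ : φ < Real.pi)
    (hφθ : φ ≤ θ) (hθ : θ + α * (Real.pi / 2) ≤ 2 * Real.pi) (hre : 0 ≤ z.re) (him : 0 ≤ z.im)
    (hr : 0 < r) :
    Complex.exp (Complex.I * (θ : ℂ)) * z ^ (α : ℂ) - Complex.exp (Complex.I * (φ : ℂ)) ≠ r := by
  have harg_nonneg : 0 ≤ α * z.arg := mul_nonneg hα (Complex.arg_nonneg_iff.2 him)
  have harg_le : α * z.arg ≤ α * (Real.pi / 2) :=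
    mul_le_mul_of_nonneg_left (Complex.arg_le_pi_div_two_iff.2 (Or.inl hre)) hα
  rw [mul_comm Complex.I, mul_comm Complex.I, exp_mul_I_mul_cpow_ofReal]
  exact ofReal_mul_exp_sub_exp_ne_ofReal (by positivity) hr hφ₀ hφπ (by linarith) (by linarith)

lemma pi_mul_min_le_three_mul_t0 {α : ℝ} (hα : 0 ≤ α) : Real.pi * min 1 α ≤ 3 * t0 α := by
  have hmin : min 1 α * (α + 2) ≤ 6 * α := by
    rcases le_total 1 α with h | h
    · rw [min_eq_left h]
      linarith
    · rw [min_eq_right h]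
      nlinarith
  calc Real.pi * min 1 α ≤ Real.pi * (6 * α / (α + 2)) := by
        gcongr
        rwa [le_div_iff₀ (by linarith)]
    _ = 3 * t0 α := by
        unfold t0
        ring

lemma pos_of_t0_sub_lt {α θ δ φ : ℝ} (hα : 0 ≤ α) (hθ : t0 α ≤ θ)
    (hδ : δ < (Real.pi * min 1 α - θ) / 2) (hφ : t0 α - δ < φ) : 0 < φ := by
  have hδt0 : δ < t0 α := by linarith [pi_mul_min_le_three_mul_t0 hα]
  linarith

/-- with `c = e^{iθ}` and `μ = e^{iφ}`, for every `a > 0` and `t ≥ 0` the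
value `c·(a+it)^α − μ` (principal branch complex power) is not a positive real number. -/
theorem stmt13 (α θ δ φ : ℝ) (hα0 : 0 < α) (hα2 : α < 2)
    (hθ1 : t0 α ≤ θ) (hθ2 : θ < min Real.pi (Real.pi * α))
    (hδ1 : 0 < δ) (hδ2 : δ < (Real.pi * min 1 α - θ) / 2)
    (hφ1 : t0 α - δ < φ) (hφ2 : φ < t0 α) :
    ∀ a : ℝ, 0 < a → ∀ t : ℝ, 0 ≤ t → ∀ r : ℝ, 0 < r →
      Complex.exp (Complex.I * (θ : ℂ)) * (((a : ℂ) + Complex.I * (t : ℂ)) ^ ((α : ℂ)))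
        - Complex.exp (Complex.I * (φ : ℂ)) ≠ (r : ℂ) := by
  have hθπ : θ < Real.pi := hθ2.trans_le (min_le_left _ _)
  exact fun a ha t ht r hr ↦ stmt13_general hα0.le (pos_of_t0_sub_lt hα0.le hθ1 hδ2 hφ1)
    (by linarith) (by linarith) (by nlinarith [Real.pi_pos]) (by simpa using ha.le)
    (by simpa using ht) hr
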